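/- (Theorem 2, part 1) The vector u_1 − exp(j·ε_tx,K)·u_3 belongs to the non-signal subspace of the noiseless auto-correlation matrix: R · (u_1 − exp(j·ε_tx,K)·u_3) = 0. -/

import Mathlib

open scoped BigOperators

/-- Steering vector `a(ε) ∈ ℂ^{n+1}` with entries `exp(j·i·ε)`, `i = 0,…,n`. -/
noncomputable def steer (n : ℕ) (ε : ℝ) : Fin (n + 1) → ℂ :=
  fun i => Complex.exp (Complex.I * ((i : ℕ) : ℂ) * (ε : ℂ))

/-- The vector `E(η_1,…,η_m) ∈ ℂ^{m+1}` defined recursively by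
`E(η_1) = (1, −exp(j·η_1))` and
`E(η_1,…,η_p) = (E(η_1,…,η_{p−1}), 0) − exp(j·η_p)·(0, E(η_1,…,η_{p−1}))`
(with base case `E() = (1)`, which reproduces the stated base case at `m = 1`). -/
noncomputable def Evec : (m : ℕ) → (Fin m → ℝ) → (Fin (m + 1) → ℂ)
  | 0, _ => fun _ => 1
  | m + 1, η => fun i =>
      Fin.snoc (α := fun _ => ℂ) (Evec m fun j => η j.castSucc) 0 i -
        Complex.exp (Complex.I * (η (Fin.last m) : ℂ)) *
          Fin.cons (α := fun _ => ℂ) 0 (Evec m fun j => η j.castSucc) i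

/-- The cyclic down-shift matrix on `ℂ^{n+1}`: `(Lv)_0 = v_n`, `(Lv)_i = v_{i−1}` for `i ≥ 1`. -/
def Lmat (n : ℕ) : Matrix (Fin (n + 1)) (Fin (n + 1)) ℂ :=
  Matrix.of fun i l => if l = i - 1 then 1 else 0

/-- Kronecker product of vectors: `(v ⊗ w)_{(i,l)} = v_i · w_l`. -/
def kron {a b : Type*} (v : a → ℂ) (w : b → ℂ) : a × b → ℂ :=
  fun p => v p.1 * w p.2

/-- `x^† y = Σ_i conj(x_i) · y_i`. -/
noncomputable def ip {n : Type*} [Fintype n] (x y : n → ℂ) : ℂ :=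
  ∑ i, (starRingEnd ℂ) (x i) * y i

/-- `x^† M y = Σ_{i,l} conj(x_i) · M_{i,l} · y_l`. -/
noncomputable def qf {n : Type*} [Fintype n] (x : n → ℂ) (M : Matrix n n ℂ) (y : n → ℂ) : ℂ :=
  ∑ i, ∑ l, (starRingEnd ℂ) (x i) * M i l * y l

/-- `E(η_1,…,η_Kp) ∈ ℂ^{Kp+1}` padded with a trailing zero, giving a vector in `ℂ^{Kp+2}`. -/
noncomputable def Epad (Kp : ℕ) (η : Fin Kp → ℝ) : Fin (Kp + 2) → ℂ :=
  Fin.snoc (Evec Kp η) 0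

/-- `u_0 = Ẽ_tx ⊗ Ẽ_rx`. -/
noncomputable def u0 (Kp : ℕ) (ηt ηr : Fin Kp → ℝ) : Fin (Kp + 2) × Fin (Kp + 2) → ℂ :=
  kron (Epad Kp ηt) (Epad Kp ηr)

/-- `u_1 = Ẽ_tx ⊗ (L·Ẽ_rx)`. -/
noncomputable def u1 (Kp : ℕ) (ηt ηr : Fin Kp → ℝ) : Fin (Kp + 2) × Fin (Kp + 2) → ℂ :=
  kron (Epad Kp ηt) ((Lmat (Kp + 1)).mulVec (Epad Kp ηr))

/-- `u_2 = (L·Ẽ_tx) ⊗ Ẽ_rx`. -/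
noncomputable def u2 (Kp : ℕ) (ηt ηr : Fin Kp → ℝ) : Fin (Kp + 2) × Fin (Kp + 2) → ℂ :=
  kron ((Lmat (Kp + 1)).mulVec (Epad Kp ηt)) (Epad Kp ηr)

/-- `u_3 = (L·Ẽ_tx) ⊗ (L·Ẽ_rx)`. -/
noncomputable def u3 (Kp : ℕ) (ηt ηr : Fin Kp → ℝ) : Fin (Kp + 2) × Fin (Kp + 2) → ℂ :=
  kron ((Lmat (Kp + 1)).mulVec (Epad Kp ηt)) ((Lmat (Kp + 1)).mulVec (Epad Kp ηr))

/-- The noiseless auto-correlation matrix `R = Σ_{k=1}^K σ_k² A_k A_k^†`, where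
`A_k = a(ε_tx,k) ⊗ a(ε_rx,k)` and `σsq k` is the power `σ_k²`. -/
noncomputable def Rmat (K : ℕ) (εtx εrx σsq : Fin K → ℝ) :
    Matrix (Fin (K + 1) × Fin (K + 1)) (Fin (K + 1) × Fin (K + 1)) ℂ :=
  Matrix.of fun p q => ∑ k, (σsq k : ℂ) *
    kron (steer K (εtx k)) (steer K (εrx k)) p *
    (starRingEnd ℂ) (kron (steer K (εtx k)) (steer K (εrx k)) q)

/-- The rank-one matrix `R_ε = a(ε) a(ε)^† ∈ ℂ^{(Kp+2)×(Kp+2)}`. -/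
noncomputable def Rsingle (Kp : ℕ) (ε : ℝ) : Matrix (Fin (Kp + 2)) (Fin (Kp + 2)) ℂ :=
  Matrix.of fun i l => steer (Kp + 1) ε i * (starRingEnd ℂ) (steer (Kp + 1) ε l)

/-- The iDEA cost `Q_tx(φ) = (u_1 − exp(j·φ)·u_3)^† R (u_1 − exp(j·φ)·u_3)`. -/
noncomputable def Qcost (Kp : ℕ) (εtx εrx σsq : Fin (Kp + 1) → ℝ)
    (ηt ηr : Fin Kp → ℝ) (φ : ℝ) : ℂ :=
  qf (u1 Kp ηt ηr - Complex.exp (Complex.I * (φ : ℂ)) • u3 Kp ηt ηr)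
    (Rmat (Kp + 1) εtx εrx σsq)
    (u1 Kp ηt ηr - Complex.exp (Complex.I * (φ : ℂ)) • u3 Kp ηt ηr)

/-- The closed-form value `4^{2K−1} · Σ_k σ_k² sin²((ε_tx,k − φ)/2) ∏_m sin²((ε_tx,k − ε̂_tx,m)/2)
∏_n sin²((ε_rx,k − ε̂_rx,n)/2)` (here `K = Kp + 1`, so `2K − 1 = 2·Kp + 1`). -/
noncomputable def Ssum (Kp : ℕ) (εtx εrx σsq : Fin (Kp + 1) → ℝ)
    (ηt ηr : Fin Kp → ℝ) (φ : ℝ) : ℝ :=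
  (4 : ℝ) ^ (2 * Kp + 1) * ∑ k, σsq k * Real.sin ((εtx k - φ) / 2) ^ 2 *
    (∏ m, Real.sin ((εtx k - ηt m) / 2) ^ 2) *
    (∏ n, Real.sin ((εrx k - ηr n) / 2) ^ 2)

/-- The `k = K` term of `Ssum`, i.e. the lower bound
`4^{2K−1} · σ_K² sin²((ε_tx,K − φ)/2) ∏_m sin²((ε_tx,K − ε̂_tx,m)/2) ∏_n sin²((ε_rx,K − ε̂_rx,n)/2)`. -/
noncomputable def Slb (Kp : ℕ) (εtx εrx σsq : Fin (Kp + 1) → ℝ)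
    (ηt ηr : Fin Kp → ℝ) (φ : ℝ) : ℝ :=
  (4 : ℝ) ^ (2 * Kp + 1) * σsq (Fin.last Kp) *
    Real.sin ((εtx (Fin.last Kp) - φ) / 2) ^ 2 *
    (∏ m, Real.sin ((εtx (Fin.last Kp) - ηt m) / 2) ^ 2) *
    (∏ n, Real.sin ((εrx (Fin.last Kp) - ηr n) / 2) ^ 2)

/-!
The generating function of `E(η_1,…,η_m)` factors as `∏_k (1 - z·exp(j·η_k))`. Evaluated at
`z = exp(-j·ε)` it is the inner product `a(ε)^† E(η_1,…,η_m)`, so `E(η_1,…,η_m)` is orthogonal to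
every `a(η_k)`. Since `L` turns trailing padding into leading padding, the recursion for `E` gives
`u_1 - exp(j·ε_tx,K)·u_3 = E(ε_tx,1,…,ε_tx,K) ⊗ (L·Ẽ_rx)`. Inner products of Kronecker products
factor, so this vector is orthogonal to every `A_k` because of its transmit factor alone.
-/

theorem steer_eq_exp_pow (n : ℕ) (ε : ℝ) (i : Fin (n + 1)) :
    steer n ε i = Complex.exp (Complex.I * ε) ^ (i : ℕ) := by
  rw [steer, ← Complex.exp_nat_mul]
  ring_nf

theorem conj_exp_I_mul (ε : ℝ) :
    (starRingEnd ℂ) (Complex.exp (Complex.I * ε)) = Complex.exp (-(Complex.I * ε)) := by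
  rw [← Complex.exp_conj, map_mul, Complex.conj_I, Complex.conj_ofReal, neg_mul]

theorem Evec_succ (m : ℕ) (η : Fin (m + 1) → ℝ) :
    Evec (m + 1) η =
      Fin.snoc (α := fun _ => ℂ) (Evec m fun j => η j.castSucc) 0 -
        Complex.exp (Complex.I * η (Fin.last m)) •
          Fin.cons (α := fun _ => ℂ) 0 (Evec m fun j => η j.castSucc) :=
  rfl

theorem sum_pow_mul_snoc_zero {n : ℕ} (z : ℂ) (v : Fin n → ℂ) :
    ∑ i : Fin (n + 1), z ^ (i : ℕ) * Fin.snoc (α := fun _ => ℂ) v 0 i =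
      ∑ i : Fin n, z ^ (i : ℕ) * v i := by
  simp [Fin.sum_univ_castSucc]

theorem sum_pow_mul_cons_zero {n : ℕ} (z : ℂ) (v : Fin n → ℂ) :
    ∑ i : Fin (n + 1), z ^ (i : ℕ) * Fin.cons (α := fun _ => ℂ) 0 v i =
      z * ∑ i : Fin n, z ^ (i : ℕ) * v i := by
  simp [Fin.sum_univ_succ, Finset.mul_sum, pow_succ', mul_assoc]

theorem sum_pow_mul_Evec (z : ℂ) (m : ℕ) (η : Fin m → ℝ) :
    ∑ i : Fin (m + 1), z ^ (i : ℕ) * Evec m η i =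
      ∏ k, (1 - z * Complex.exp (Complex.I * η k)) := by
  induction m with
  | zero => simp [Evec]
  | succ m ih =>
    simp only [Evec_succ, Pi.sub_apply, Pi.smul_apply, smul_eq_mul, mul_sub,
      mul_left_comm _ (Complex.exp _), Finset.sum_sub_distrib, ← Finset.mul_sum,
      sum_pow_mul_snoc_zero, sum_pow_mul_cons_zero, ih, Fin.prod_univ_castSucc]
    ring

theorem ip_steer_Evec (m : ℕ) (η : Fin m → ℝ) (ε : ℝ) :
    ip (steer m ε) (Evec m η) =
      ∏ k, (1 - Complex.exp (-(Complex.I * ε)) * Complex.exp (Complex.I * η k)) := by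
  simp only [ip, steer_eq_exp_pow, map_pow, conj_exp_I_mul, sum_pow_mul_Evec]

theorem ip_steer_Evec_self (m : ℕ) (η : Fin m → ℝ) (k : Fin m) :
    ip (steer m (η k)) (Evec m η) = 0 := by
  rw [ip_steer_Evec]
  refine Finset.prod_eq_zero (Finset.mem_univ k) ?_
  rw [← Complex.exp_add, neg_add_cancel, Complex.exp_zero, sub_self]

theorem Lmat_mulVec_apply (n : ℕ) (v : Fin (n + 1) → ℂ) (i : Fin (n + 1)) :
    (Lmat n).mulVec v i = v (i - 1) := by
  simp [Matrix.mulVec, dotProduct, Lmat]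

theorem Lmat_mulVec_snoc (n : ℕ) (v : Fin n → ℂ) (c : ℂ) :
    (Lmat n).mulVec (Fin.snoc v c) = Fin.cons (α := fun _ => ℂ) c v := by
  funext i
  rw [Lmat_mulVec_apply]
  cases i using Fin.cases with
  | zero =>
    have zero_sub_one : (0 : Fin (n + 1)) - 1 = Fin.last n := by
      rw [sub_eq_iff_eq_add, Fin.last_add_one]
    rw [zero_sub_one, Fin.snoc_last, Fin.cons_zero]
  | succ j =>
    have succ_sub_one : j.succ - 1 = j.castSucc := by
      rw [sub_eq_iff_eq_add, Fin.coeSucc_eq_succ]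
    rw [succ_sub_one, Fin.snoc_castSucc, Fin.cons_succ]

theorem Epad_sub_smul_Lmat_mulVec (Kp : ℕ) (η : Fin (Kp + 1) → ℝ) :
    Epad Kp (fun i => η i.castSucc) -
        Complex.exp (Complex.I * η (Fin.last Kp)) •
          (Lmat (Kp + 1)).mulVec (Epad Kp fun i => η i.castSucc) =
      Evec (Kp + 1) η := by
  rw [Epad, Lmat_mulVec_snoc, Evec_succ]

section Kronecker

variable {a b : Type*}

theorem kron_sub_smul_left (c : ℂ) (v v' : a → ℂ) (w : b → ℂ) :
    kron (v - c • v') w = kron v w - c • kron v' w := by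
  funext p
  simp only [kron, Pi.sub_apply, Pi.smul_apply, smul_eq_mul]
  ring

theorem ip_kron_kron [Fintype a] [Fintype b] (v v' : a → ℂ) (w w' : b → ℂ) :
    ip (kron v w) (kron v' w') = ip v v' * ip w w' := by
  simp only [ip, kron, map_mul, Fintype.sum_mul_sum, Fintype.sum_prod_type, mul_mul_mul_comm]

end Kronecker

theorem u1_sub_smul_u3 (Kp : ℕ) (η : Fin (Kp + 1) → ℝ) (ηr : Fin Kp → ℝ) :
    u1 Kp (fun i => η i.castSucc) ηr -
        Complex.exp (Complex.I * η (Fin.last Kp)) • u3 Kp (fun i => η i.castSucc) ηr =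
      kron (Evec (Kp + 1) η) ((Lmat (Kp + 1)).mulVec (Epad Kp ηr)) := by
  rw [u1, u3, ← kron_sub_smul_left, Epad_sub_smul_Lmat_mulVec]

theorem Rmat_mulVec (K : ℕ) (εtx εrx σsq : Fin K → ℝ) (x : Fin (K + 1) × Fin (K + 1) → ℂ) :
    (Rmat K εtx εrx σsq).mulVec x =
      ∑ k, ((σsq k : ℂ) * ip (kron (steer K (εtx k)) (steer K (εrx k))) x) •
        kron (steer K (εtx k)) (steer K (εrx k)) := by
  funext p
  simp only [Matrix.mulVec, dotProduct, Rmat, Matrix.of_apply, Finset.sum_apply, Pi.smul_apply,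
    smul_eq_mul, ip, Finset.sum_mul, Finset.mul_sum]
  rw [Finset.sum_comm]
  refine Finset.sum_congr rfl fun k _ => Finset.sum_congr rfl fun q _ => ?_
  ring

theorem Rmat_mulVec_kron_eq_zero {K : ℕ} {εtx : Fin K → ℝ} {v : Fin (K + 1) → ℂ}
    (hv : ∀ k, ip (steer K (εtx k)) v = 0) (εrx σsq : Fin K → ℝ) (w : Fin (K + 1) → ℂ) :
    (Rmat K εtx εrx σsq).mulVec (kron v w) = 0 := by
  simp only [Rmat_mulVec, ip_kron_kron, hv, zero_mul, mul_zero, zero_smul, Finset.sum_const_zero]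

theorem statement6_general (Kp : ℕ) (εtx εrx σsq : Fin (Kp + 1) → ℝ) (ηr : Fin Kp → ℝ) :
    (Rmat (Kp + 1) εtx εrx σsq).mulVec
      (u1 Kp (fun i => εtx i.castSucc) ηr -
        Complex.exp (Complex.I * εtx (Fin.last Kp)) • u3 Kp (fun i => εtx i.castSucc) ηr) = 0 := by
  rw [u1_sub_smul_u3]
  exact Rmat_mulVec_kron_eq_zero (ip_steer_Evec_self (Kp + 1) εtx) εrx σsq _

/-- Theorem 2, part 1: R · (u_1 − exp(j·ε_tx,K)·u_3) = 0. -/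
theorem statement6 (Kp : ℕ) (hKp : 1 ≤ Kp) (εtx εrx : Fin (Kp + 1) → ℝ)
    (σsq : Fin (Kp + 1) → ℝ) (hσ : ∀ k, 0 < σsq k) :
    (Rmat (Kp + 1) εtx εrx σsq).mulVec
      (u1 Kp (fun i => εtx i.castSucc) (fun i => εrx i.castSucc) - Complex.exp (Complex.I * (εtx (Fin.last Kp) : ℂ)) • u3 Kp (fun i => εtx i.castSucc) (fun i => εrx i.castSucc)) = 0 :=
  statement6_general Kp εtx εrx σsq _
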